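/- For every positive integer m with m ≡ 0 or 1 (mod 4), the number σ_m of Skolem sequences of order m satisfies σ_m ≥ 2^{⌊m/3⌋}. -/

import Mathlib

/-!
A Skolem sequence of order `m` is a placement of the values `k ∈ [1, m]` at subscripts `p k` and
`p k + k` that are pairwise distinct (`Valid`).

The lower bound comes from a local move. Suppose the values `c, c + 1, c - 1` start at
`X, X + 1, X + 2`, so that with `Y = X + c` they end at `Y, Y + 2, Y + 1`. Letting them start at
`X + 2, X, X + 1` instead, they end at `Y + 2, Y + 1, Y`, so the same six subscripts are occupied.
If a placement contains `n` disjoint triples of this kind, they can be toggled independently, which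
gives `2 ^ n` sequences; and `N` such placements which differ outside the triples give `N * 2 ^ n`
(`mul_two_pow_le_skolemCount`). It remains to find placements with many triples.

* If `m = 3 * q + 1`, then `q ≡ 0, 1 (mod 4)`, and a Skolem sequence of order `q`, which exists by
  induction, can be tripled: its pair of value `k` becomes a triple centred at the value `3 * k`,
  and the value `1` is appended. This gives `q` triples (`two_pow_le_of_valid`).
* Otherwise `m ≡ 0, 5, 8, 9 (mod 12)`. Here `m / 3 - 2` triples are arranged in nested families
  (`Layout`): in a nested family the centres of the triples grow in steps of `6`, and two families
  whose centres differ by `3` modulo `6` cover almost all values. The few remaining values can be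
  placed in the gaps in four different ways, which supplies the missing factor `4`
  (`two_pow_le_of_layoutA`, `two_pow_le_of_layoutB`). The order `5` is too small for this and is
  done by hand.
-/

/-- A Skolem sequence of order `m`, modeled as a function `l : Fin (2*m) → ℕ`:
for every `k ∈ [1, m]` there are exactly two subscripts carrying the value `k`,
and they differ by exactly `k`. -/
def IsSkolem (m : ℕ) (l : Fin (2 * m) → ℕ) : Prop :=
  ∀ k : ℕ, 1 ≤ k → k ≤ m →
    ∃ i j : Fin (2 * m), i < j ∧ (j : ℕ) - (i : ℕ) = k ∧
      (∀ t : Fin (2 * m), l t = k ↔ t = i ∨ t = j)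

/-- `σ_m`: the number of Skolem sequences of order `m`. -/
noncomputable def skolemCount (m : ℕ) : ℕ :=
  Nat.card {l : Fin (2 * m) → ℕ // IsSkolem m l}

/-! ### Skolem sequences as placements of pairs -/

/-- `p` describes a Skolem sequence of order `m`: the value `k ∈ [1, m]` sits at the (zero-based)
subscripts `p k` and `p k + k`. Only the values of `p` on `[1, m]` matter. -/
structure Valid (m : ℕ) (p : ℕ → ℕ) : Prop where
  bound : ∀ k, 1 ≤ k → k ≤ m → p k + k < 2 * m
  inj : ∀ k k', 1 ≤ k → k ≤ m → 1 ≤ k' → k' ≤ m → p k = p k' → k = k'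
  inj_add : ∀ k k', 1 ≤ k → k ≤ m → 1 ≤ k' → k' ≤ m → p k + k = p k' + k' → k = k'
  disj : ∀ k j, 1 ≤ k → k ≤ m → 1 ≤ j → j ≤ m → p k ≠ p j + j

/-- The `m` disjoint pairs fill all `2 * m` subscripts. -/
theorem Valid.cover {m : ℕ} {p : ℕ → ℕ} (h : Valid m p) {t : ℕ} (ht : t < 2 * m) :
    ∃ k, 1 ≤ k ∧ k ≤ m ∧ (t = p k ∨ t = p k + k) := by
  classical
  have hA : ((Finset.Icc 1 m).image p).card = m := by
    rw [Finset.card_image_of_injOn, Nat.card_Icc, Nat.add_sub_cancel]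
    intro a ha b hb hab
    simp only [Finset.coe_Icc, Set.mem_Icc] at ha hb
    exact h.inj a b ha.1 ha.2 hb.1 hb.2 hab
  have hB : ((Finset.Icc 1 m).image (fun k => p k + k)).card = m := by
    rw [Finset.card_image_of_injOn, Nat.card_Icc, Nat.add_sub_cancel]
    intro a ha b hb hab
    simp only [Finset.coe_Icc, Set.mem_Icc] at ha hb
    exact h.inj_add a b ha.1 ha.2 hb.1 hb.2 hab
  have hAB : Disjoint ((Finset.Icc 1 m).image p) ((Finset.Icc 1 m).image (fun k => p k + k)) := by
    rw [Finset.disjoint_left]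
    intro x hx hx'
    simp only [Finset.mem_image, Finset.mem_Icc] at hx hx'
    obtain ⟨a, ha, rfl⟩ := hx
    obtain ⟨b, hb, hab⟩ := hx'
    exact h.disj a b ha.1 ha.2 hb.1 hb.2 hab.symm
  have hsub : (Finset.Icc 1 m).image p ∪ (Finset.Icc 1 m).image (fun k => p k + k)
      ⊆ Finset.range (2 * m) := by
    intro x hx
    simp only [Finset.mem_union, Finset.mem_image, Finset.mem_Icc] at hx
    rw [Finset.mem_range]
    rcases hx with ⟨a, ha, rfl⟩ | ⟨a, ha, rfl⟩ <;> have := h.bound a ha.1 ha.2 <;> omega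
  have heq := Finset.eq_of_subset_of_card_le hsub (by
    rw [Finset.card_union_of_disjoint hAB, hA, hB, Finset.card_range]; omega)
  have : t ∈ (Finset.Icc 1 m).image p ∪ (Finset.Icc 1 m).image (fun k => p k + k) := by
    rw [heq]; exact Finset.mem_range.2 ht
  simp only [Finset.mem_union, Finset.mem_image, Finset.mem_Icc] at this
  rcases this with ⟨a, ha, rfl⟩ | ⟨a, ha, rfl⟩
  · exact ⟨a, ha.1, ha.2, Or.inl rfl⟩
  · exact ⟨a, ha.1, ha.2, Or.inr rfl⟩

theorem IsSkolem.exists_valid {m : ℕ} {l : Fin (2 * m) → ℕ} (h : IsSkolem m l) :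
    ∃ p, Valid m p ∧ ∀ k, 1 ≤ k → k ≤ m →
      ∀ t : Fin (2 * m), l t = k ↔ (t : ℕ) = p k ∨ (t : ℕ) = p k + k := by
  have h' : ∀ k, ∃ a : ℕ, 1 ≤ k → k ≤ m → a + k < 2 * m ∧
      ∀ t : Fin (2 * m), l t = k ↔ (t : ℕ) = a ∨ (t : ℕ) = a + k := by
    intro k
    by_cases hk : 1 ≤ k ∧ k ≤ m
    · obtain ⟨i, j, hij, hd, hl⟩ := h k hk.1 hk.2
      have hij' : (i : ℕ) < j := hij
      refine ⟨i, fun _ _ => ⟨by omega, fun t => ?_⟩⟩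
      rw [hl t, Fin.ext_iff, Fin.ext_iff]
      omega
    · exact ⟨0, fun h1 h2 => absurd ⟨h1, h2⟩ hk⟩
  choose p hp using h'
  have hfst : ∀ k (h1 : 1 ≤ k) (h2 : k ≤ m), l ⟨p k, by have := (hp k h1 h2).1; omega⟩ = k :=
    fun k h1 h2 => ((hp k h1 h2).2 _).2 (Or.inl rfl)
  have hsnd : ∀ k (h1 : 1 ≤ k) (h2 : k ≤ m), l ⟨p k + k, (hp k h1 h2).1⟩ = k :=
    fun k h1 h2 => ((hp k h1 h2).2 _).2 (Or.inr rfl)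
  refine ⟨p, ⟨fun k h1 h2 => (hp k h1 h2).1, ?_, ?_, ?_⟩, fun k h1 h2 => (hp k h1 h2).2⟩
  · intro k k' h1 h2 h1' h2' e
    rw [← hfst k h1 h2, ← hfst k' h1' h2']
    simp only [e]
  · intro k k' h1 h2 h1' h2' e
    rw [← hsnd k h1 h2, ← hsnd k' h1' h2']
    simp only [e]
  · intro k k' h1 h2 h1' h2' e
    have hkk : k = k' := by
      rw [← hfst k h1 h2, ← hsnd k' h1' h2']
      simp only [e]
    subst hkk
    omega

theorem Valid.exists_isSkolem {m : ℕ} {p : ℕ → ℕ} (h : Valid m p) :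
    ∃ l : Fin (2 * m) → ℕ, IsSkolem m l ∧ ∀ k, 1 ≤ k → k ≤ m →
      ∀ t : Fin (2 * m), l t = k ↔ (t : ℕ) = p k ∨ (t : ℕ) = p k + k := by
  choose l hl1 hl2 hl using fun t : Fin (2 * m) => h.cover t.2
  have key : ∀ k, 1 ≤ k → k ≤ m →
      ∀ t : Fin (2 * m), l t = k ↔ (t : ℕ) = p k ∨ (t : ℕ) = p k + k := by
    intro k h1 h2 t
    constructor
    · rintro rfl
      exact hl t
    · intro ht
      have h3 := h.inj (l t) k (hl1 t) (hl2 t) h1 h2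
      have h4 := h.inj_add (l t) k (hl1 t) (hl2 t) h1 h2
      have h5 := h.disj (l t) k (hl1 t) (hl2 t) h1 h2
      have h6 := h.disj k (l t) h1 h2 (hl1 t) (hl2 t)
      have h7 := hl t
      omega
  refine ⟨l, fun k h1 h2 => ?_, key⟩
  have hb := h.bound k h1 h2
  refine ⟨⟨p k, by omega⟩, ⟨p k + k, hb⟩, ?_, ?_, fun t => ?_⟩
  · rw [Fin.lt_def]; simp only; omega
  · simp
  · rw [key k h1 h2, Fin.ext_iff, Fin.ext_iff]

/-- Every entry of a Skolem sequence lies in `[1, m]`, so `skolemCount` counts a finite type and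
is not a junk value. -/
theorem finite_isSkolem (m : ℕ) : Finite {l : Fin (2 * m) → ℕ // IsSkolem m l} := by
  have hle : ∀ l : {l : Fin (2 * m) → ℕ // IsSkolem m l}, ∀ t, l.1 t < m + 1 := by
    rintro ⟨l, hl⟩ t
    obtain ⟨p, hp, hlp⟩ := hl.exists_valid
    obtain ⟨k, h1, h2, hk⟩ := hp.cover t.2
    have := (hlp k h1 h2 t).2 hk
    simp only
    omega
  refine Finite.of_injective
    (fun l t => (⟨l.1 t, hle l t⟩ : Fin (m + 1)) :
      {l : Fin (2 * m) → ℕ // IsSkolem m l} → Fin (2 * m) → Fin (m + 1)) ?_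
  intro l l' e
  apply Subtype.ext
  funext t
  exact congrArg Fin.val (congrFun e t)

theorem card_le_skolemCount {m : ℕ} {T : Type*} (P : T → ℕ → ℕ)
    (hv : ∀ τ, Valid m (P τ))
    (hinj : ∀ τ τ', (∀ k, 1 ≤ k → k ≤ m → P τ k = P τ' k) → τ = τ') :
    Nat.card T ≤ skolemCount m := by
  choose l hl hlP using fun τ => (hv τ).exists_isSkolem
  have := finite_isSkolem m
  refine Nat.card_le_card_of_injective
    (fun τ => (⟨l τ, hl τ⟩ : {l : Fin (2 * m) → ℕ // IsSkolem m l})) ?_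
  intro τ τ' e
  have e' : l τ = l τ' := congrArg Subtype.val e
  refine hinj τ τ' fun k h1 h2 => ?_
  have hb := (hv τ).bound k h1 h2
  have hb' := (hv τ').bound k h1 h2
  have a1 := (hlP τ k h1 h2 ⟨P τ k, by omega⟩).2 (Or.inl rfl)
  have a2 := (hlP τ' k h1 h2 ⟨P τ' k, by omega⟩).2 (Or.inl rfl)
  rw [e', hlP τ' k h1 h2] at a1
  rw [← e', hlP τ k h1 h2] at a2
  simp only at a1 a2
  omega

/-! ### Toggling triples of consecutive values -/

/-- The set `C` consists of centres `c` of triples `c - 1, c, c + 1` of consecutive values in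
`[1, m]`, any two triples being disjoint. -/
structure Centres (m : ℕ) (C : Finset ℕ) : Prop where
  low : ∀ c ∈ C, 2 ≤ c
  high : ∀ c ∈ C, c + 1 ≤ m
  sep : ∀ c ∈ C, ∀ d ∈ C, c = d ∨ c + 3 ≤ d ∨ d + 3 ≤ c

/-- For each centre `c` in `C`, the values `c, c + 1, c - 1` start at `X, X + 1, X + 2`, so that
they end at `Y, Y + 2, Y + 1` with `Y = X + c`. Starting them at `X + 2, X, X + 1` instead
occupies the same six subscripts. -/
def Togglable (C : Finset ℕ) (p : ℕ → ℕ) : Prop :=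
  ∀ c ∈ C, p (c + 1) = p c + 1 ∧ p (c - 1) = p c + 2

/-- After toggling the triples centred in `S`, the value `k` starts where `startFrom S k` did. -/
def startFrom (S : Finset ℕ) (k : ℕ) : ℕ :=
  if k ∈ S ∨ k - 1 ∈ S then k - 1 else if k + 1 ∈ S then k + 2 else k

/-- After toggling the triples centred in `S`, the value `k` ends where `endFrom S k` did. -/
def endFrom (S : Finset ℕ) (k : ℕ) : ℕ :=
  if k ∈ S ∨ k + 1 ∈ S then k + 1 else if k - 1 ∈ S then k - 2 else k

theorem from_cases {m : ℕ} {S : Finset ℕ} (hS : Centres m S) (k : ℕ) :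
    (∃ c ∈ S, 2 ≤ c ∧ c + 1 ≤ m ∧
      (k = c ∧ startFrom S k = c - 1 ∧ endFrom S k = c + 1 ∨
       k = c - 1 ∧ startFrom S k = c + 1 ∧ endFrom S k = c ∨
       k = c + 1 ∧ startFrom S k = c ∧ endFrom S k = c - 1)) ∨
    (∀ c ∈ S, k ≠ c ∧ k ≠ c - 1 ∧ k ≠ c + 1) ∧ startFrom S k = k ∧ endFrom S k = k := by
  have far : ∀ c ∈ S, ∀ d, d ≠ c → c < d + 3 → d < c + 3 → d ∉ S := fun c hc d h1 h2 h3 hd => by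
    have := hS.sep c hc d hd
    omega
  by_cases h : ∃ c ∈ S, k = c ∨ k = c - 1 ∨ k = c + 1
  · left
    obtain ⟨c, hc, hk⟩ := h
    have h2 := hS.low c hc
    refine ⟨c, hc, h2, hS.high c hc, ?_⟩
    rcases hk with rfl | rfl | rfl
    · left
      simp [startFrom, endFrom, hc]
    · right; left
      have e : c - 1 + 1 = c := by omega
      have n1 := far c hc (c - 1) (by omega) (by omega) (by omega)
      have n2 := far c hc (c - 1 - 1) (by omega) (by omega) (by omega)
      refine ⟨rfl, ?_, ?_⟩
      · simp only [startFrom, e, hc, n1, n2, or_self, if_true, if_false]; omega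
      · simp only [endFrom, e, hc, or_true, if_true]
    · right; right
      have n1 := far c hc (c + 1) (by omega) (by omega) (by omega)
      have n2 := far c hc (c + 1 + 1) (by omega) (by omega) (by omega)
      refine ⟨rfl, ?_, ?_⟩
      · simp [startFrom, hc]
      · simp only [endFrom, n1, n2, or_self, if_false, Nat.add_sub_cancel, hc, if_true]; omega
  · right
    have h' : ∀ c ∈ S, k ≠ c ∧ k ≠ c - 1 ∧ k ≠ c + 1 := fun c hc =>
      ⟨fun e => h ⟨c, hc, Or.inl e⟩, fun e => h ⟨c, hc, Or.inr (Or.inl e)⟩,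
        fun e => h ⟨c, hc, Or.inr (Or.inr e)⟩⟩
    have n0 : k ∉ S := fun hk => (h' k hk).1 rfl
    have n1 : k + 1 ∉ S := fun hk => (h' _ hk).2.1 (by omega)
    have n2 : k - 1 ∉ S := fun hk => by
      have := h' _ hk
      have := hS.low _ hk
      omega
    refine ⟨h', ?_, ?_⟩
    · simp [startFrom, n0, n1, n2]
    · simp [endFrom, n0, n1, n2]

theorem startFrom_mem {m : ℕ} {S : Finset ℕ} (hS : Centres m S) {k : ℕ} (h1 : 1 ≤ k)
    (h2 : k ≤ m) : 1 ≤ startFrom S k ∧ startFrom S k ≤ m := by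
  rcases from_cases hS k with ⟨c, _, h⟩ | ⟨_, h⟩ <;> omega

theorem endFrom_mem {m : ℕ} {S : Finset ℕ} (hS : Centres m S) {k : ℕ} (h1 : 1 ≤ k)
    (h2 : k ≤ m) : 1 ≤ endFrom S k ∧ endFrom S k ≤ m := by
  rcases from_cases hS k with ⟨c, _, h⟩ | ⟨_, h⟩ <;> omega

theorem from_inj {m : ℕ} {S : Finset ℕ} (hS : Centres m S) {k k' : ℕ} :
    (startFrom S k = startFrom S k' → k = k') ∧ (endFrom S k = endFrom S k' → k = k') := by
  rcases from_cases hS k with ⟨c, hc, h⟩ | ⟨hc, h⟩ <;>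
  rcases from_cases hS k' with ⟨d, hd, h'⟩ | ⟨hd, h'⟩
  · have := hS.sep c hc d hd
    omega
  · have := hd c hc
    omega
  · have := hc d hd
    omega
  · omega

theorem toggle_add {m : ℕ} {S : Finset ℕ} (hS : Centres m S) {p : ℕ → ℕ} (hp : Togglable S p)
    (k : ℕ) : p (startFrom S k) + k = p (endFrom S k) + endFrom S k := by
  rcases from_cases hS k with ⟨c, hc, h2, _, h⟩ | ⟨_, h⟩
  · have := hp c hc
    rcases h with ⟨e, e1, e2⟩ | ⟨e, e1, e2⟩ | ⟨e, e1, e2⟩ <;> rw [e1, e2] <;> omega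
  · rw [h.1, h.2]

theorem Valid.toggle {m : ℕ} {S : Finset ℕ} (hS : Centres m S) {p : ℕ → ℕ} (hv : Valid m p)
    (hp : Togglable S p) : Valid m (fun k => p (startFrom S k)) := by
  refine ⟨fun k h1 h2 => ?_, fun k k' h1 h2 h1' h2' e => ?_, fun k k' h1 h2 h1' h2' e => ?_,
    fun k k' h1 h2 h1' h2' => ?_⟩
  · have h3 := endFrom_mem hS h1 h2
    simp only [toggle_add hS hp]
    exact hv.bound _ h3.1 h3.2
  · have h3 := startFrom_mem hS h1 h2
    have h4 := startFrom_mem hS h1' h2'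
    exact (from_inj hS).1 (hv.inj _ _ h3.1 h3.2 h4.1 h4.2 e)
  · have h3 := endFrom_mem hS h1 h2
    have h4 := endFrom_mem hS h1' h2'
    simp only [toggle_add hS hp] at e
    exact (from_inj hS).2 (hv.inj_add _ _ h3.1 h3.2 h4.1 h4.2 e)
  · have h3 := startFrom_mem hS h1 h2
    have h4 := endFrom_mem hS h1' h2'
    simp only [toggle_add hS hp]
    exact hv.disj _ _ h3.1 h3.2 h4.1 h4.2

theorem Centres.mono {m : ℕ} {S C : Finset ℕ} (hC : Centres m C) (h : S ⊆ C) : Centres m S :=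
  ⟨fun c hc => hC.low c (h hc), fun c hc => hC.high c (h hc),
    fun c hc d hd => hC.sep c (h hc) d (h hd)⟩

/-- Toggling the triples independently in each of `N` placements that differ outside the triples
gives `N * 2 ^ #C` distinct Skolem sequences. -/
theorem mul_two_pow_le_skolemCount {m N : ℕ} {C : Finset ℕ} (hC : Centres m C)
    (p : Fin N → ℕ → ℕ) (hv : ∀ j, Valid m (p j)) (hp : ∀ j, Togglable C (p j))
    (hne : ∀ j j', j ≠ j' →
      ∃ k, 1 ≤ k ∧ k ≤ m ∧ k - 1 ∉ C ∧ k ∉ C ∧ k + 1 ∉ C ∧ p j k ≠ p j' k) :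
    N * 2 ^ C.card ≤ skolemCount m := by
  have hcard : Nat.card (Fin N × {S // S ∈ C.powerset}) = N * 2 ^ C.card := by
    rw [Nat.card_prod, Nat.card_eq_fintype_card, Nat.card_eq_fintype_card, Fintype.card_fin,
      Fintype.card_coe, Finset.card_powerset]
  rw [← hcard]
  refine card_le_skolemCount (fun τ k => p τ.1 (startFrom τ.2.1 k)) ?_ ?_
  · rintro ⟨j, S, hS⟩
    have hSC := Finset.mem_powerset.1 hS
    exact (hv j).toggle (hC.mono hSC) fun c hc => hp j c (hSC hc)
  · rintro ⟨j, S, hS⟩ ⟨j', S', hS'⟩ e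
    have hSC := Finset.mem_powerset.1 hS
    have hSC' := Finset.mem_powerset.1 hS'
    simp only at e
    have hj : j = j' := by
      by_contra hj
      obtain ⟨k, h1, h2, n1, n2, n3, hk⟩ := hne j j' hj
      have fixed : ∀ U ⊆ C, startFrom U k = k := fun U hU => by
        have m1 : k - 1 ∉ U := fun h => n1 (hU h)
        have m2 : k ∉ U := fun h => n2 (hU h)
        have m3 : k + 1 ∉ U := fun h => n3 (hU h)
        simp [startFrom, m1, m2, m3]
      apply hk
      have := e k h1 h2
      rwa [fixed S hSC, fixed S' hSC'] at this
    subst hj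
    -- a centre `c` has been toggled exactly if the value `c` no longer starts at `p j c`
    have key : ∀ U ⊆ C, ∀ c ∈ C, (c ∈ U ↔ p j (startFrom U c) ≠ p j c) := by
      intro U hU c hc
      have h2 := hC.low c hc
      have hpc := hp j c hc
      constructor
      · intro hcU
        simp only [startFrom, hcU, true_or, if_true]
        omega
      · intro hne
        by_contra hcU
        have m1 : c - 1 ∉ U := fun h => by
          have := hC.sep c hc _ (hU h)
          omega
        have m2 : c + 1 ∉ U := fun h => by
          have := hC.sep c hc _ (hU h)
          omega
        simp [startFrom, hcU, m1, m2] at hne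
    have : S = S' := by
      ext c
      constructor
      · intro hc
        have hcC := hSC hc
        rw [key S' hSC' c hcC, ← e c (by have := hC.low c hcC; omega)
          (by have := hC.high c hcC; omega), ← key S hSC c hcC]
        exact hc
      · intro hc
        have hcC := hSC' hc
        rw [key S hSC c hcC, e c (by have := hC.low c hcC; omega)
          (by have := hC.high c hcC; omega), ← key S' hSC' c hcC]
        exact hc
    subst this
    rfl

/-! ### Orders `3 * q + 1`: tripling a Skolem sequence -/

/-- A Skolem sequence of order `q` is tripled: its pair of value `k` becomes a triple of values
`3 * k - 1, 3 * k, 3 * k + 1`, and the value `1` is put at the end. -/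
def triplePos (q : ℕ) (P : ℕ → ℕ) (k : ℕ) : ℕ :=
  if k = 1 then 6 * q
  else if k % 3 = 0 then 3 * P (k / 3)
  else if k % 3 = 1 then 3 * P (k / 3) + 1
  else 3 * P ((k + 1) / 3) + 2

theorem triplePos_cases (q : ℕ) (P : ℕ → ℕ) {k : ℕ} (h1 : 1 ≤ k) (h2 : k ≤ 3 * q + 1) :
    k = 1 ∧ triplePos q P k = 6 * q ∨
    ∃ a, 1 ≤ a ∧ a ≤ q ∧ (k = 3 * a ∧ triplePos q P k = 3 * P a ∨
      k = 3 * a + 1 ∧ triplePos q P k = 3 * P a + 1 ∨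
      k + 1 = 3 * a ∧ triplePos q P k = 3 * P a + 2) := by
  unfold triplePos
  by_cases hk : k = 1
  · left; simp [hk]
  · right
    by_cases h3 : k % 3 = 0
    · refine ⟨k / 3, by omega, by omega, Or.inl ⟨by omega, ?_⟩⟩
      simp [hk, h3]
    by_cases h4 : k % 3 = 1
    · refine ⟨k / 3, by omega, by omega, Or.inr (Or.inl ⟨by omega, ?_⟩)⟩
      simp [hk, h4]
    · refine ⟨(k + 1) / 3, by omega, by omega, Or.inr (Or.inr ⟨by omega, ?_⟩)⟩
      simp [hk, h3, h4]

theorem valid_triplePos {q : ℕ} {P : ℕ → ℕ} (hP : Valid q P) :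
    Valid (3 * q + 1) (triplePos q P) := by
  refine ⟨fun k h1 h2 => ?_, fun k k' h1 h2 h1' h2' => ?_, fun k k' h1 h2 h1' h2' => ?_,
    fun k k' h1 h2 h1' h2' => ?_⟩
  · rcases triplePos_cases q P h1 h2 with h | ⟨a, ha, ha', h⟩
    · omega
    · have := hP.bound a ha ha'
      omega
  all_goals
    rcases triplePos_cases q P h1 h2 with h | ⟨a, ha, ha', h⟩ <;>
    rcases triplePos_cases q P h1' h2' with h' | ⟨b, hb, hb', h'⟩
    · omega
    · have := hP.bound b hb hb'
      omega
    · have := hP.bound a ha ha'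
      omega
    · have i1 := hP.inj a b ha ha' hb hb'
      have i2 := hP.inj_add a b ha ha' hb hb'
      have i3 := hP.disj a b ha ha' hb hb'
      omega

theorem two_pow_le_of_valid {q : ℕ} {P : ℕ → ℕ} (hP : Valid q P) :
    2 ^ q ≤ skolemCount (3 * q + 1) := by
  have hmem : ∀ c, c ∈ (Finset.Icc 1 q).image (fun a => 3 * a) ↔
      ∃ a, 1 ≤ a ∧ a ≤ q ∧ 3 * a = c := by
    intro c
    simp only [Finset.mem_image, Finset.mem_Icc, and_assoc]
  have hC : Centres (3 * q + 1) ((Finset.Icc 1 q).image (fun a => 3 * a)) := by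
    refine ⟨fun c hc => ?_, fun c hc => ?_, fun c hc d hd => ?_⟩
    · obtain ⟨a, h⟩ := (hmem c).1 hc
      omega
    · obtain ⟨a, h⟩ := (hmem c).1 hc
      omega
    · obtain ⟨a, h⟩ := (hmem c).1 hc
      obtain ⟨b, h'⟩ := (hmem d).1 hd
      omega
  have hT : Togglable ((Finset.Icc 1 q).image (fun a => 3 * a)) (triplePos q P) := by
    intro c hc
    obtain ⟨a, h1, h2, rfl⟩ := (hmem c).1 hc
    have e1 : (3 * a + 1) / 3 = a := by omega
    have e2 : (3 * a - 1 + 1) / 3 = a := by omega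
    have e3 : (3 * a + 1) % 3 = 1 := by omega
    have e4 : (3 * a - 1) % 3 = 2 := by omega
    have e5 : (3 * a) / 3 = a := by omega
    have e6 : (3 * a) % 3 = 0 := by omega
    have e7 : ¬ 3 * a = 1 := by omega
    have e8 : ¬ 3 * a - 1 = 1 := by omega
    have e9 : ¬ 3 * a + 1 = 1 := by omega
    simp only [triplePos, e1, e2, e3, e4, e5, e6, e7, e8, e9, if_true, if_false]
    simp
  have hcard : ((Finset.Icc 1 q).image (fun a => 3 * a)).card = q := by
    rw [Finset.card_image_of_injective _ (fun a b (h : 3 * a = 3 * b) => by omega), Nat.card_Icc,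
      Nat.add_sub_cancel]
  have := mul_two_pow_le_skolemCount (N := 1) hC (fun _ => triplePos q P)
    (fun _ => valid_triplePos hP) (fun _ => hT) (fun j j' h => absurd (Subsingleton.elim j j') h)
  rwa [hcard, one_mul] at this

theorem exists_valid_of_pos {q : ℕ} (h : 0 < skolemCount q) : ∃ P, Valid q P := by
  obtain ⟨⟨l, hl⟩⟩ := (Nat.card_pos_iff.1 h).1
  obtain ⟨P, hP, -⟩ := hl.exists_valid
  exact ⟨P, hP⟩

/-! ### Nested blocks of triples -/

/-- Data for a placement made of three families of nested triples and a few single values. The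
`2 * m` subscripts are cut into consecutive intervals
`outer starts | J1 | inner starts | C1 | inner ends | J2 | outer ends | E1 | last starts | C2 |
last ends`, where the named gaps begin at the subscripts `J1, C1, J2, E1, C2`, and have lengths
`j1, c1, 6 - j1, e1, c2`. There are `o`, `i`, `f` triples in the outer, inner, and last family. -/
structure Layout where
  (i o f c1 c2 j1 e1 m J1 C1 J2 E1 C2 : ℕ)
  hc : c2 = c1 + 3 ∨ c1 = c2 + 3
  hj : j1 ≤ 6
  hJ1 : J1 = 3 * o
  hC1 : C1 = J1 + j1 + 3 * i
  hJ2 : J2 = C1 + c1 + 3 * i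
  hE1 : E1 = J2 + (6 - j1) + 3 * o
  hC2 : C2 = E1 + e1 + 3 * f
  hm : 2 * m = C2 + c2 + 3 * f

namespace Layout

/-- The values used by a family of `n` triples whose least value is `a`: the residues
`a, a + 1, a + 2` modulo `6` in an interval of length `6 * n`. The residues in between are left for
another family. -/
def InArm (a n k : ℕ) : Prop := a ≤ k ∧ k < a + 6 * n ∧ (k - a) % 6 < 3

instance (a n k : ℕ) : Decidable (InArm a n k) := by unfold InArm; infer_instance

/-- The start of the value `k` in a family whose starts end just before the subscript `X`. -/
def armPos (a X k : ℕ) : ℕ := X - 3 * ((k - a) / 6 + 1) + ((k - a) % 6 + 2) % 3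

/-- The placement with the given families of triples, in which the remaining values are placed
by `s`. -/
def pos (L : Layout) (s : ℕ → ℕ) (k : ℕ) : ℕ :=
  if InArm (L.c1 + 2) L.i k then armPos (L.c1 + 2) L.C1 k
  else if InArm (L.c1 + 6 * L.i + 8) L.o k then armPos (L.c1 + 6 * L.i + 8) L.J1 k
  else if InArm (L.c2 + 2) L.f k then armPos (L.c2 + 2) L.C2 k
  else s k

/-- The values not belonging to a triple. -/
def Single (L : Layout) (k : ℕ) : Prop :=
  ¬ InArm (L.c1 + 2) L.i k ∧ ¬ InArm (L.c1 + 6 * L.i + 8) L.o k ∧ ¬ InArm (L.c2 + 2) L.f k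

/-- The subscripts not used by a triple. -/
def Gap (L : Layout) (t : ℕ) : Prop :=
  L.J1 ≤ t ∧ t < L.J1 + L.j1 ∨ L.C1 ≤ t ∧ t < L.C1 + L.c1 ∨
  L.J2 ≤ t ∧ t < L.J2 + (6 - L.j1) ∨ L.E1 ≤ t ∧ t < L.E1 + L.e1 ∨
  L.C2 ≤ t ∧ t < L.C2 + L.c2

theorem arm_cases {a n X k : ℕ} (h : InArm a n k) (hX : 3 * n ≤ X) :
    ∃ x, x < n ∧ (k = a + 6 * x ∧ armPos a X k + 3 * x + 1 = X ∨
      k = a + 6 * x + 1 ∧ armPos a X k + 3 * x + 3 = X ∨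
      k = a + 6 * x + 2 ∧ armPos a X k + 3 * x + 2 = X) := by
  obtain ⟨h1, h2, h3⟩ := h
  refine ⟨(k - a) / 6, by omega, ?_⟩
  unfold armPos
  omega

theorem pos_cases (L : Layout) (s : ℕ → ℕ) (k : ℕ) :
    (∃ x, x < L.i ∧ (k = L.c1 + 2 + 6 * x ∧ L.pos s k + 3 * x + 1 = L.C1 ∨
      k = L.c1 + 2 + 6 * x + 1 ∧ L.pos s k + 3 * x + 3 = L.C1 ∨
      k = L.c1 + 2 + 6 * x + 2 ∧ L.pos s k + 3 * x + 2 = L.C1)) ∨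
    (∃ x, x < L.o ∧ (k = L.c1 + 6 * L.i + 8 + 6 * x ∧ L.pos s k + 3 * x + 1 = L.J1 ∨
      k = L.c1 + 6 * L.i + 8 + 6 * x + 1 ∧ L.pos s k + 3 * x + 3 = L.J1 ∨
      k = L.c1 + 6 * L.i + 8 + 6 * x + 2 ∧ L.pos s k + 3 * x + 2 = L.J1)) ∨
    (∃ x, x < L.f ∧ (k = L.c2 + 2 + 6 * x ∧ L.pos s k + 3 * x + 1 = L.C2 ∨
      k = L.c2 + 2 + 6 * x + 1 ∧ L.pos s k + 3 * x + 3 = L.C2 ∨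
      k = L.c2 + 2 + 6 * x + 2 ∧ L.pos s k + 3 * x + 2 = L.C2)) ∨
    L.Single k ∧ L.pos s k = s k := by
  have hJ1 := L.hJ1
  have hC1 := L.hC1
  have hC2 := L.hC2
  unfold pos
  by_cases h1 : InArm (L.c1 + 2) L.i k
  · left
    rw [if_pos h1]
    exact arm_cases h1 (by omega)
  by_cases h2 : InArm (L.c1 + 6 * L.i + 8) L.o k
  · right; left
    rw [if_neg h1, if_pos h2]
    exact arm_cases h2 (by omega)
  by_cases h3 : InArm (L.c2 + 2) L.f k
  · right; right; left
    rw [if_neg h1, if_neg h2, if_pos h3]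
    exact arm_cases h3 (by omega)
  · right; right; right
    rw [if_neg h1, if_neg h2, if_neg h3]
    exact ⟨⟨h1, h2, h3⟩, rfl⟩

theorem pos_single (L : Layout) (s : ℕ → ℕ) {k : ℕ} (h : L.Single k) : L.pos s k = s k := by
  unfold pos
  rw [if_neg h.1, if_neg h.2.1, if_neg h.2.2]

theorem gap_lt (L : Layout) {t : ℕ} (h : L.Gap t) : t < 2 * L.m := by
  obtain ⟨i, o, f, c1, c2, j1, e1, m, J1, C1, J2, E1, C2, hc, hj, hJ1, hC1, hJ2, hE1, hC2, hm⟩ := L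
  simp only [Gap] at *
  omega

/-- A value belonging to a triple stays out of the gaps. -/
theorem single_or (L : Layout) (s : ℕ → ℕ) (k : ℕ) :
    (¬ L.Gap (L.pos s k) ∧ ¬ L.Gap (L.pos s k + k) ∧ L.pos s k + k < 2 * L.m) ∨
    L.Single k ∧ L.pos s k = s k := by
  have hpos := L.pos_cases s k
  obtain ⟨i, o, f, c1, c2, j1, e1, m, J1, C1, J2, E1, C2, hc, hj, hJ1, hC1, hJ2, hE1, hC2, hm⟩ := L
  generalize (Layout.pos _ s k) = u at *
  simp only [Gap] at hpos ⊢
  subst hJ1 hC1 hJ2 hE1 hC2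
  rcases hpos with ⟨x, hx, h⟩ | ⟨x, hx, h⟩ | ⟨x, hx, h⟩ | h
  · left
    refine ⟨?_, ?_, ?_⟩ <;> omega
  · left
    refine ⟨?_, ?_, ?_⟩ <;> omega
  · left
    refine ⟨?_, ?_, ?_⟩ <;> omega
  · exact Or.inr h

/-- Triples do not collide with each other. -/
theorem not_single (L : Layout) (s : ℕ → ℕ) (k k' : ℕ) (hk : ¬ L.Single k) (hk' : ¬ L.Single k') :
    (L.pos s k = L.pos s k' → k = k') ∧ (L.pos s k + k = L.pos s k' + k' → k = k') ∧
      L.pos s k ≠ L.pos s k' + k' := by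
  have hpos := L.pos_cases s k
  have hpos' := L.pos_cases s k'
  obtain ⟨i, o, f, c1, c2, j1, e1, m, J1, C1, J2, E1, C2, hc, hj, hJ1, hC1, hJ2, hE1, hC2, hm⟩ := L
  generalize (Layout.pos _ s k) = u at *
  generalize (Layout.pos _ s k') = u' at *
  simp only at hpos hpos'
  subst hJ1 hC1 hJ2 hE1 hC2
  rcases hpos with ⟨x, hx, h⟩ | ⟨x, hx, h⟩ | ⟨x, hx, h⟩ | h
  case inr.inr.inr => exact absurd h.1 hk
  all_goals
    rcases hpos' with ⟨y, hy, h'⟩ | ⟨y, hy, h'⟩ | ⟨y, hy, h'⟩ | h'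
    case inr.inr.inr => exact absurd h'.1 hk'
    all_goals
      clear hk hk'
      rcases h with ⟨rfl, h⟩ | ⟨rfl, h⟩ | ⟨rfl, h⟩ <;>
      rcases h' with ⟨rfl, h'⟩ | ⟨rfl, h'⟩ | ⟨rfl, h'⟩ <;> omega

/-- It suffices to check that the single values fill gaps without collisions. -/
theorem valid_pos (L : Layout) (s : ℕ → ℕ)
    (hgap : ∀ k, 1 ≤ k → k ≤ L.m → L.Single k → L.Gap (s k) ∧ L.Gap (s k + k))
    (hs : ∀ k k', 1 ≤ k → k ≤ L.m → L.Single k → 1 ≤ k' → k' ≤ L.m → L.Single k' →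
      (s k = s k' → k = k') ∧ (s k + k = s k' + k' → k = k') ∧ s k ≠ s k' + k') :
    Valid L.m (L.pos s) := by
  have main : ∀ k k', 1 ≤ k → k ≤ L.m → 1 ≤ k' → k' ≤ L.m →
    L.pos s k + k < 2 * L.m ∧ (L.pos s k = L.pos s k' → k = k') ∧
    (L.pos s k + k = L.pos s k' + k' → k = k') ∧ L.pos s k ≠ L.pos s k' + k' := by
    intro k k' h1 h2 h1' h2'
    have single : ∀ j, 1 ≤ j → j ≤ L.m → L.Single j → L.pos s j = s j →
        L.Gap (L.pos s j) ∧ L.Gap (L.pos s j + j) := fun j h1 h2 hj e => by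
      rw [e]
      exact hgap j h1 h2 hj
    rcases L.single_or s k with ⟨n1, n2, n3⟩ | ⟨hk, e⟩ <;>
    rcases L.single_or s k' with ⟨n1', n2', n3'⟩ | ⟨hk', e'⟩
    · refine ⟨n3, L.not_single s k k' (fun hk => ?_) (fun hk' => ?_)⟩
      · exact n1 (single k h1 h2 hk (L.pos_single s hk)).1
      · exact n1' (single k' h1' h2' hk' (L.pos_single s hk')).1
    · have g := single k' h1' h2' hk' e'
      refine ⟨n3, fun h => ?_, fun h => ?_, fun h => ?_⟩
      · exact absurd (h ▸ g.1) n1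
      · exact absurd (h ▸ g.2) n2
      · exact absurd (h ▸ g.2) n1
    · have g := single k h1 h2 hk e
      refine ⟨L.gap_lt g.2, fun h => ?_, fun h => ?_, fun h => ?_⟩
      · exact absurd (h ▸ g.1) n1'
      · exact absurd (h ▸ g.2) n2'
      · exact absurd (h ▸ g.1) n2'
    · rw [e, e']
      exact ⟨L.gap_lt (hgap k h1 h2 hk).2, hs k k' h1 h2 hk h1' h2' hk'⟩
  exact ⟨fun k h1 h2 => (main k k h1 h2 h1 h2).1,
    fun k k' h1 h2 h1' h2' => (main k k' h1 h2 h1' h2').2.1,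
    fun k k' h1 h2 h1' h2' => (main k k' h1 h2 h1' h2').2.2.1,
    fun k k' h1 h2 h1' h2' => (main k k' h1 h2 h1' h2').2.2.2⟩

/-- The centre of the `x`-th triple, the inner, outer, and last families being listed one after
the other. -/
def centre (c1 c2 i o x : ℕ) : ℕ :=
  if x < i then c1 + 3 + 6 * x
  else if x < i + o then c1 + 9 + 6 * x
  else c2 + 3 + 6 * (x - (i + o))

/-- The centres of all triples. -/
def centres (c1 c2 i o f : ℕ) : Finset ℕ := (Finset.range (i + o + f)).image (centre c1 c2 i o)

theorem centre_cases (c1 c2 i o f : ℕ) {x : ℕ} (hx : x < i + o + f) :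
    x < i ∧ centre c1 c2 i o x = c1 + 3 + 6 * x ∨
    i ≤ x ∧ x < i + o ∧ centre c1 c2 i o x = c1 + 9 + 6 * x ∨
    i + o ≤ x ∧ x < i + o + f ∧ centre c1 c2 i o x = c2 + 3 + 6 * (x - (i + o)) := by
  unfold centre
  split_ifs <;> omega

theorem mem_centres {c1 c2 i o f c : ℕ} : c ∈ centres c1 c2 i o f ↔
    ∃ x, x < i + o + f ∧ centre c1 c2 i o x = c := by
  simp [centres]

theorem card_centres {c1 c2 i o f : ℕ} (hc : c2 = c1 + 3 ∨ c1 = c2 + 3) :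
    (centres c1 c2 i o f).card = i + o + f := by
  unfold centres
  rw [Finset.card_image_of_injOn, Finset.card_range]
  intro x hx y hy (h : centre c1 c2 i o x = centre c1 c2 i o y)
  have hx' := centre_cases c1 c2 i o f (Finset.mem_range.1 hx)
  have hy' := centre_cases c1 c2 i o f (Finset.mem_range.1 hy)
  omega

theorem centres_centres {c1 c2 i o f m : ℕ} (hc : c2 = c1 + 3 ∨ c1 = c2 + 3)
    (ho : c1 + 6 * i + 6 * o + 4 ≤ m) (hf : c2 + 6 * f ≤ m + 2) :
    Centres m (centres c1 c2 i o f) := by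
  refine ⟨fun c h => ?_, fun c h => ?_, fun c h d h' => ?_⟩
  · obtain ⟨x, hx, rfl⟩ := mem_centres.1 h
    have := centre_cases c1 c2 i o f hx
    omega
  · obtain ⟨x, hx, rfl⟩ := mem_centres.1 h
    have := centre_cases c1 c2 i o f hx
    omega
  · obtain ⟨x, hx, rfl⟩ := mem_centres.1 h
    obtain ⟨y, hy, rfl⟩ := mem_centres.1 h'
    have := centre_cases c1 c2 i o f hx
    have := centre_cases c1 c2 i o f hy
    omega

theorem not_mem_centres {c1 c2 i o f c : ℕ} (h1 : c < c1 + 3) (h2 : c < c2 + 3) :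
    c ∉ centres c1 c2 i o f := by
  intro h
  obtain ⟨x, hx, rfl⟩ := mem_centres.1 h
  have := centre_cases c1 c2 i o f hx
  omega

theorem arm_centre {a n x X : ℕ} (hx : x < n) (hX : 3 * n ≤ X) :
    InArm a n (a + 1 + 6 * x) ∧ InArm a n (a + 1 + 6 * x + 1) ∧ InArm a n (a + 1 + 6 * x - 1) ∧
      armPos a X (a + 1 + 6 * x + 1) = armPos a X (a + 1 + 6 * x) + 1 ∧
      armPos a X (a + 1 + 6 * x - 1) = armPos a X (a + 1 + 6 * x) + 2 := by
  unfold InArm armPos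
  omega

theorem pos_inner (L : Layout) (s : ℕ → ℕ) {k : ℕ} (h : InArm (L.c1 + 2) L.i k) :
    L.pos s k = armPos (L.c1 + 2) L.C1 k := by
  rw [pos, if_pos h]

theorem pos_outer (L : Layout) (s : ℕ → ℕ) {k : ℕ} (h : InArm (L.c1 + 6 * L.i + 8) L.o k) :
    L.pos s k = armPos (L.c1 + 6 * L.i + 8) L.J1 k := by
  rw [pos, if_neg _, if_pos h]
  unfold InArm at *
  omega

theorem pos_last (L : Layout) (s : ℕ → ℕ) {k : ℕ} (h : InArm (L.c2 + 2) L.f k) :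
    L.pos s k = armPos (L.c2 + 2) L.C2 k := by
  have := L.hc
  rw [pos, if_neg _, if_neg _, if_pos h] <;>
  · unfold InArm at *
    omega

theorem togglable_pos (L : Layout) (s : ℕ → ℕ) :
    Togglable (centres L.c1 L.c2 L.i L.o L.f) (L.pos s) := by
  intro c h
  obtain ⟨x, hx, rfl⟩ := mem_centres.1 h
  have hJ1 := L.hJ1
  have hC1 := L.hC1
  have hC2 := L.hC2
  rcases centre_cases L.c1 L.c2 L.i L.o L.f hx with ⟨hx, e⟩ | ⟨hx, hx', e⟩ | ⟨hx, hx', e⟩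
  · obtain ⟨m0, m1, m2, e1, e2⟩ := arm_centre (a := L.c1 + 2) (X := L.C1) hx (by omega)
    rw [e, L.pos_inner s m0, L.pos_inner s m1, L.pos_inner s m2]
    exact ⟨e1, e2⟩
  · obtain ⟨m0, m1, m2, e1, e2⟩ := arm_centre (a := L.c1 + 6 * L.i + 8) (X := L.J1)
      (show x - L.i < L.o by omega) (by omega)
    rw [show centre L.c1 L.c2 L.i L.o x = L.c1 + 6 * L.i + 8 + 1 + 6 * (x - L.i) by omega,
      L.pos_outer s m0, L.pos_outer s m1, L.pos_outer s m2]
    exact ⟨e1, e2⟩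
  · obtain ⟨m0, m1, m2, e1, e2⟩ := arm_centre (a := L.c2 + 2) (X := L.C2)
      (show x - (L.i + L.o) < L.f by omega) (by omega)
    rw [e, L.pos_last s m0, L.pos_last s m1, L.pos_last s m2]
    exact ⟨e1, e2⟩

end Layout

/-! ### Orders `5` and `8` modulo `12` -/

/-- The layout for `m = 12 * s + 5` (with `i = s`, `o = s - 1`) and `m = 12 * s + 8` (with
`i = o = s`). -/
def layoutA (i o m : ℕ) (hm : m = 9 * i + 3 * o + 8) : Layout where
  i := i
  o := o
  f := 2 * i
  c1 := 2
  c2 := 5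
  j1 := 4
  e1 := 3
  m := m
  J1 := 3 * o
  C1 := 3 * o + 4 + 3 * i
  J2 := 3 * o + 6 + 6 * i
  E1 := 6 * o + 8 + 6 * i
  C2 := 6 * o + 11 + 12 * i
  hc := by omega
  hj := by omega
  hJ1 := by omega
  hC1 := by omega
  hJ2 := by omega
  hE1 := by omega
  hC2 := by omega
  hm := by omega

/-- Positions for the single values of `layoutA`. The values `m - 1` and `m` start in `C1` in all
four placements below, while the six others get the positions `a1, …, a6`. -/
def tableA (i o m a1 a2 a3 a4 a5 a6 k : ℕ) : ℕ :=
  if k = 1 then a1 else if k = 2 then a2 else if k = 3 then a3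
  else if k = 6 * i + 4 then a4 else if k = 6 * i + 5 then a5 else if k = 6 * i + 6 then a6
  else if k + 1 = m then 3 * o + 4 + 3 * i else 3 * o + 5 + 3 * i

/-- Four ways of placing the single values. -/
def singlesA (i o m : ℕ) : Fin 4 → ℕ → ℕ
  | 0 => tableA i o m (3 * o + 1) (6 * o + 8 + 6 * i) (6 * o + 12 + 12 * i)
      (3 * o + 3) (6 * o + 9 + 6 * i) (3 * o)
  | 1 => tableA i o m (6 * o + 8 + 6 * i) (3 * o + 1) (6 * o + 12 + 12 * i)
      (6 * o + 10 + 6 * i) (3 * o + 2) (3 * o)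
  | 2 => tableA i o m (6 * o + 8 + 6 * i) (6 * o + 12 + 12 * i) (3 * o)
      (3 * o + 2) (6 * o + 10 + 6 * i) (3 * o + 1)
  | 3 => tableA i o m (6 * o + 9 + 6 * i) (3 * o) (6 * o + 12 + 12 * i)
      (3 * o + 3) (3 * o + 1) (6 * o + 8 + 6 * i)

theorem tableA_cases {i o m k : ℕ} (hm : m = 9 * i + 3 * o + 8) (hio : i = o ∨ i = o + 1)
    (a1 a2 a3 a4 a5 a6 : ℕ) (h1 : 1 ≤ k) (h2 : k ≤ m) (h : (layoutA i o m hm).Single k) :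
    k = 1 ∧ tableA i o m a1 a2 a3 a4 a5 a6 k = a1 ∨
    k = 2 ∧ tableA i o m a1 a2 a3 a4 a5 a6 k = a2 ∨
    k = 3 ∧ tableA i o m a1 a2 a3 a4 a5 a6 k = a3 ∨
    k = 6 * i + 4 ∧ tableA i o m a1 a2 a3 a4 a5 a6 k = a4 ∨
    k = 6 * i + 5 ∧ tableA i o m a1 a2 a3 a4 a5 a6 k = a5 ∨
    k = 6 * i + 6 ∧ tableA i o m a1 a2 a3 a4 a5 a6 k = a6 ∨
    k + 1 = m ∧ tableA i o m a1 a2 a3 a4 a5 a6 k = 3 * o + 4 + 3 * i ∨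
    k = m ∧ tableA i o m a1 a2 a3 a4 a5 a6 k = 3 * o + 5 + 3 * i := by
  have hk : k = 1 ∨ k = 2 ∨ k = 3 ∨ k = 6 * i + 4 ∨ k = 6 * i + 5 ∨ k = 6 * i + 6 ∨
      k + 1 = m ∨ k = m := by
    simp only [Layout.Single, Layout.InArm, layoutA] at h
    omega
  unfold tableA
  rcases hk with e | e | e | e | e | e | e | e
  · refine Or.inl ⟨e, ?_⟩
    split_ifs
    rfl
  · refine Or.inr (Or.inl ⟨e, ?_⟩)
    split_ifs <;> first | rfl | omega
  · refine Or.inr (Or.inr (Or.inl ⟨e, ?_⟩))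
    split_ifs <;> first | rfl | omega
  · refine Or.inr (Or.inr (Or.inr (Or.inl ⟨e, ?_⟩)))
    split_ifs <;> first | rfl | omega
  · refine Or.inr (Or.inr (Or.inr (Or.inr (Or.inl ⟨e, ?_⟩))))
    split_ifs <;> first | rfl | omega
  · refine Or.inr (Or.inr (Or.inr (Or.inr (Or.inr (Or.inl ⟨e, ?_⟩)))))
    split_ifs <;> first | rfl | omega
  · refine Or.inr (Or.inr (Or.inr (Or.inr (Or.inr (Or.inr (Or.inl ⟨e, ?_⟩))))))
    split_ifs <;> first | rfl | omega
  · refine Or.inr (Or.inr (Or.inr (Or.inr (Or.inr (Or.inr (Or.inr ⟨e, ?_⟩))))))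
    split_ifs <;> first | rfl | omega

/-- The hypothesis `H` lists the placements of `singlesA`. -/
theorem valid_tableA {i o m : ℕ} (hm : m = 9 * i + 3 * o + 8) (hio : i = o ∨ i = o + 1)
    (a1 a2 a3 a4 a5 a6 : ℕ)
    (H : (a1 = 3 * o + 1 ∧ a2 = 6 * o + 8 + 6 * i ∧ a3 = 6 * o + 12 + 12 * i ∧
        a4 = 3 * o + 3 ∧ a5 = 6 * o + 9 + 6 * i ∧ a6 = 3 * o) ∨
      (a1 = 6 * o + 8 + 6 * i ∧ a2 = 3 * o + 1 ∧ a3 = 6 * o + 12 + 12 * i ∧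
        a4 = 6 * o + 10 + 6 * i ∧ a5 = 3 * o + 2 ∧ a6 = 3 * o) ∨
      (a1 = 6 * o + 8 + 6 * i ∧ a2 = 6 * o + 12 + 12 * i ∧ a3 = 3 * o ∧
        a4 = 3 * o + 2 ∧ a5 = 6 * o + 10 + 6 * i ∧ a6 = 3 * o + 1) ∨
      (a1 = 6 * o + 9 + 6 * i ∧ a2 = 3 * o ∧ a3 = 6 * o + 12 + 12 * i ∧
        a4 = 3 * o + 3 ∧ a5 = 3 * o + 1 ∧ a6 = 6 * o + 8 + 6 * i)) :
    Valid m ((layoutA i o m hm).pos (tableA i o m a1 a2 a3 a4 a5 a6)) := by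
  refine (layoutA i o m hm).valid_pos _ (fun k h1 h2 h => ?_)
    (fun k k' h1 h2 h h1' h2' h' => ?_)
  · have hk := tableA_cases hm hio a1 a2 a3 a4 a5 a6 h1 h2 h
    generalize tableA i o m a1 a2 a3 a4 a5 a6 k = u at hk ⊢
    simp only [Layout.Gap, layoutA]
    clear h h1 h2
    rcases H with H | H | H | H <;>
    rcases hk with hk | hk | hk | hk | hk | hk | hk | hk <;> omega
  · have hk := tableA_cases hm hio a1 a2 a3 a4 a5 a6 h1 h2 h
    have hk' := tableA_cases hm hio a1 a2 a3 a4 a5 a6 h1' h2' h'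
    generalize tableA i o m a1 a2 a3 a4 a5 a6 k = u at hk ⊢
    generalize tableA i o m a1 a2 a3 a4 a5 a6 k' = u' at hk' ⊢
    clear h h' h1 h2 h1' h2'
    rcases H with H | H | H | H <;>
    rcases hk with hk | hk | hk | hk | hk | hk | hk | hk <;>
    rcases hk' with hk' | hk' | hk' | hk' | hk' | hk' | hk' | hk' <;> omega

theorem two_pow_le_of_layoutA {i o m : ℕ} (hm : m = 9 * i + 3 * o + 8)
    (hio : i = o ∨ i = o + 1) : 2 ^ (m / 3) ≤ skolemCount m := by
  have hcard := Layout.card_centres (c1 := 2) (c2 := 5) (i := i) (o := o) (f := 2 * i) (by omega)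
  have hlow : ∀ c < 5, c ∉ Layout.centres 2 5 i o (2 * i) := fun c hc =>
    Layout.not_mem_centres (by omega) (by omega)
  have h1 : ∀ s, (layoutA i o m hm).pos s 1 = s 1 := fun s => by
    apply Layout.pos_single
    simp only [Layout.Single, Layout.InArm, layoutA]
    omega
  have h2 : ∀ s, (layoutA i o m hm).pos s 2 = s 2 := fun s => by
    apply Layout.pos_single
    simp only [Layout.Single, Layout.InArm, layoutA]
    omega
  have main := mul_two_pow_le_skolemCount (N := 4) (m := m) (C := Layout.centres 2 5 i o (2 * i))
    (Layout.centres_centres (by omega) (by omega) (by omega))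
    (fun j => (layoutA i o m hm).pos (singlesA i o m j))
    (fun j => by
      fin_cases j
      · exact valid_tableA hm hio _ _ _ _ _ _ (by omega)
      · exact valid_tableA hm hio _ _ _ _ _ _ (by omega)
      · exact valid_tableA hm hio _ _ _ _ _ _ (by omega)
      · exact valid_tableA hm hio _ _ _ _ _ _ (by omega))
    (fun j => (layoutA i o m hm).togglable_pos _)
    (fun j j' hjj => by
      by_contra hcon
      -- the starts of the values `1` and `2` tell the four placements apart
      have e1 : singlesA i o m j 1 = singlesA i o m j' 1 := by
        by_contra hne
        refine hcon ⟨1, le_rfl, by omega, hlow _ (by omega), hlow _ (by omega),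
          hlow _ (by omega), ?_⟩
        rw [h1, h1]
        exact hne
      have e2 : singlesA i o m j 2 = singlesA i o m j' 2 := by
        by_contra hne
        refine hcon ⟨2, by omega, by omega, hlow _ (by omega), hlow _ (by omega),
          hlow _ (by omega), ?_⟩
        rw [h2, h2]
        exact hne
      fin_cases j <;> fin_cases j' <;> simp [singlesA, tableA] at hjj e1 e2 <;> omega)
  rw [hcard] at main
  rwa [show m / 3 = 2 + (i + o + 2 * i) by omega, pow_add]

/-! ### Orders `0` and `9` modulo `12` -/

/-- The layout for `m = 12 * s + 9` (with `f = 2 * s + 1`) and `m = 12 * s + 12` (with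
`f = 2 * s + 2`). The lengths `j1` and `6 - j1` of the gaps `J1` and `J2` are left free: the triples
have the same values for all `j1`. -/
def layoutB (s f m j1 : ℕ) (hm : m = 6 * s + 3 * f + 6) (hj : j1 ≤ 6) : Layout where
  i := s
  o := s
  f := f
  c1 := 4
  c2 := 1
  j1 := j1
  e1 := 1
  m := m
  J1 := 3 * s
  C1 := 6 * s + j1
  J2 := 9 * s + j1 + 4
  E1 := 12 * s + 10
  C2 := 12 * s + 11 + 3 * f
  hc := by omega
  hj := hj
  hJ1 := by omega
  hC1 := by omega
  hJ2 := by omega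
  hE1 := by omega
  hC2 := by omega
  hm := by omega

/-- Positions for the single values of `layoutB`. In all four placements below the value `m` starts
at `6 * s + 5`. -/
def tableB (s a1 a2 a3 a4 a5 k : ℕ) : ℕ :=
  if k = 1 then a1 else if k = 2 then a2 else if k = 6 * s + 6 then a3
  else if k = 6 * s + 7 then a4 else if k = 6 * s + 8 then a5 else 6 * s + 5

/-- Four ways of placing the single values, the last one for `j1 = 4` and the others for
`j1 = 2`. -/
def singlesB (s : ℕ) : Fin 4 → ℕ → ℕ
  | 0 => tableB s (6 * s + 2) (9 * s + 6) (6 * s + 4) (3 * s) (3 * s + 1)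
  | 1 => tableB s (6 * s + 3) (9 * s + 7) (3 * s) (3 * s + 1) (6 * s + 2)
  | 2 => tableB s (9 * s + 7) (6 * s + 2) (3 * s) (6 * s + 3) (3 * s + 1)
  | 3 => tableB s (6 * s + 6) (3 * s + 1) (6 * s + 4) (3 * s + 2) (3 * s)

/-- The length of the gap `J1` for each of the placements `singlesB`. -/
def gapB : Fin 4 → ℕ
  | 3 => 4
  | _ => 2

theorem gapB_le (j : Fin 4) : gapB j ≤ 6 := by
  fin_cases j <;> simp [gapB]

theorem tableB_cases {s f m j1 k : ℕ} (hm : m = 6 * s + 3 * f + 6) (hj : j1 ≤ 6)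
    (hf : f = 2 * s + 1 ∨ f = 2 * s + 2)
    (a1 a2 a3 a4 a5 : ℕ) (h1 : 1 ≤ k) (h2 : k ≤ m) (h : (layoutB s f m j1 hm hj).Single k) :
    k = 1 ∧ tableB s a1 a2 a3 a4 a5 k = a1 ∨
    k = 2 ∧ tableB s a1 a2 a3 a4 a5 k = a2 ∨
    k = 6 * s + 6 ∧ tableB s a1 a2 a3 a4 a5 k = a3 ∨
    k = 6 * s + 7 ∧ tableB s a1 a2 a3 a4 a5 k = a4 ∨
    k = 6 * s + 8 ∧ tableB s a1 a2 a3 a4 a5 k = a5 ∨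
    k = m ∧ tableB s a1 a2 a3 a4 a5 k = 6 * s + 5 := by
  have hk : k = 1 ∨ k = 2 ∨ k = 6 * s + 6 ∨ k = 6 * s + 7 ∨ k = 6 * s + 8 ∨ k = m := by
    simp only [Layout.Single, Layout.InArm, layoutB] at h
    omega
  unfold tableB
  rcases hk with e | e | e | e | e | e
  · refine Or.inl ⟨e, ?_⟩
    split_ifs
    rfl
  · refine Or.inr (Or.inl ⟨e, ?_⟩)
    split_ifs <;> first | rfl | omega
  · refine Or.inr (Or.inr (Or.inl ⟨e, ?_⟩))
    split_ifs <;> first | rfl | omega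
  · refine Or.inr (Or.inr (Or.inr (Or.inl ⟨e, ?_⟩)))
    split_ifs <;> first | rfl | omega
  · refine Or.inr (Or.inr (Or.inr (Or.inr (Or.inl ⟨e, ?_⟩))))
    split_ifs <;> first | rfl | omega
  · refine Or.inr (Or.inr (Or.inr (Or.inr (Or.inr ⟨e, ?_⟩))))
    split_ifs <;> first | rfl | omega

/-- The hypothesis `H` lists the placements of `singlesB`. -/
theorem valid_tableB {s f m j1 : ℕ} (hm : m = 6 * s + 3 * f + 6) (hj : j1 ≤ 6)
    (hf : f = 2 * s + 1 ∨ f = 2 * s + 2) (a1 a2 a3 a4 a5 : ℕ)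
    (H : (j1 = 2 ∧ a1 = 6 * s + 2 ∧ a2 = 9 * s + 6 ∧ a3 = 6 * s + 4 ∧ a4 = 3 * s ∧
        a5 = 3 * s + 1) ∨
      (j1 = 2 ∧ a1 = 6 * s + 3 ∧ a2 = 9 * s + 7 ∧ a3 = 3 * s ∧ a4 = 3 * s + 1 ∧
        a5 = 6 * s + 2) ∨
      (j1 = 2 ∧ a1 = 9 * s + 7 ∧ a2 = 6 * s + 2 ∧ a3 = 3 * s ∧ a4 = 6 * s + 3 ∧
        a5 = 3 * s + 1) ∨
      (j1 = 4 ∧ a1 = 6 * s + 6 ∧ a2 = 3 * s + 1 ∧ a3 = 6 * s + 4 ∧ a4 = 3 * s + 2 ∧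
        a5 = 3 * s)) :
    Valid m ((layoutB s f m j1 hm hj).pos (tableB s a1 a2 a3 a4 a5)) := by
  refine (layoutB s f m j1 hm hj).valid_pos _ (fun k h1 h2 h => ?_)
    (fun k k' h1 h2 h h1' h2' h' => ?_)
  · have hk := tableB_cases hm hj hf a1 a2 a3 a4 a5 h1 h2 h
    generalize tableB s a1 a2 a3 a4 a5 k = u at hk ⊢
    simp only [Layout.Gap, layoutB]
    clear h h1 h2
    rcases H with H | H | H | H <;>
    rcases hk with hk | hk | hk | hk | hk | hk <;> omega
  · have hk := tableB_cases hm hj hf a1 a2 a3 a4 a5 h1 h2 h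
    have hk' := tableB_cases hm hj hf a1 a2 a3 a4 a5 h1' h2' h'
    generalize tableB s a1 a2 a3 a4 a5 k = u at hk ⊢
    generalize tableB s a1 a2 a3 a4 a5 k' = u' at hk' ⊢
    clear h h' h1 h2 h1' h2'
    rcases H with H | H | H | H <;>
    rcases hk with hk | hk | hk | hk | hk | hk <;>
    rcases hk' with hk' | hk' | hk' | hk' | hk' | hk' <;> omega

theorem two_pow_le_of_layoutB {s f m : ℕ} (hm : m = 6 * s + 3 * f + 6)
    (hf : f = 2 * s + 1 ∨ f = 2 * s + 2) : 2 ^ (m / 3) ≤ skolemCount m := by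
  have hcard := Layout.card_centres (c1 := 4) (c2 := 1) (i := s) (o := s) (f := f) (by omega)
  have hlow : ∀ c < 4, c ∉ Layout.centres 4 1 s s f := fun c hc =>
    Layout.not_mem_centres (by omega) (by omega)
  have h1 : ∀ j t, (layoutB s f m (gapB j) hm (gapB_le j)).pos t 1 = t 1 := fun j t => by
    apply Layout.pos_single
    simp only [Layout.Single, Layout.InArm, layoutB]
    omega
  have main := mul_two_pow_le_skolemCount (N := 4) (m := m) (C := Layout.centres 4 1 s s f)
    (Layout.centres_centres (by omega) (by omega) (by omega))
    (fun j => (layoutB s f m (gapB j) hm (gapB_le j)).pos (singlesB s j))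
    (fun j => by
      fin_cases j
      · exact valid_tableB hm (gapB_le 0) hf _ _ _ _ _ (by simp [gapB])
      · exact valid_tableB hm (gapB_le 1) hf _ _ _ _ _ (by simp [gapB])
      · exact valid_tableB hm (gapB_le 2) hf _ _ _ _ _ (by simp [gapB])
      · exact valid_tableB hm (gapB_le 3) hf _ _ _ _ _ (by simp [gapB]))
    (fun j => (layoutB s f m (gapB j) hm (gapB_le j)).togglable_pos _)
    (fun j j' hjj => by
      -- the start of the value `1` tells the four placements apart
      refine ⟨1, le_rfl, by omega, hlow _ (by omega), hlow _ (by omega), hlow _ (by omega), ?_⟩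
      rw [h1, h1]
      fin_cases j <;> fin_cases j' <;> simp [singlesB, tableB] at hjj ⊢ <;> omega)
  rw [hcard] at main
  rwa [show m / 3 = 2 + (s + s + f) by omega, pow_add]

/-! ### The remaining order `5` -/

/-- The Skolem sequences `1, 1, 3, 4, 5, 3, 2, 4, 2, 5` and `5, 2, 4, 2, 3, 5, 4, 3, 1, 1`. -/
def posFive (j : Fin 2) (k : ℕ) : ℕ :=
  if j = 0 then
    if k = 1 then 0 else if k = 2 then 6 else if k = 3 then 2 else if k = 4 then 3 else 4
  else
    if k = 1 then 8 else if k = 2 then 1 else if k = 3 then 4 else if k = 4 then 2 else 0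

theorem two_le_skolemCount_five : 2 ≤ skolemCount 5 := by
  have := mul_two_pow_le_skolemCount (m := 5) (N := 2) (C := ∅)
    ⟨by simp, by simp, by simp⟩ posFive
    (fun j => by
      refine ⟨fun k h1 h2 => ?_, fun k k' h1 h2 h1' h2' => ?_, fun k k' h1 h2 h1' h2' => ?_,
        fun k k' h1 h2 h1' h2' => ?_⟩
      · fin_cases j <;> interval_cases k <;> simp [posFive]
      all_goals
        fin_cases j <;> interval_cases k <;> interval_cases k' <;> simp [posFive])
    (fun j => by simp [Togglable])
    (fun j j' hjj => by
      refine ⟨1, le_rfl, by omega, by simp, by simp, by simp, ?_⟩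
      fin_cases j <;> fin_cases j' <;> simp [posFive] at hjj ⊢)
  simpa using this

/-- For `m ≡ 0, 1 (mod 4)`: `σ_m ≥ 2^⌊m/3⌋`. -/
theorem skolem_count_lower_bound (m : ℕ) (hm : 0 < m)
    (hmod : m % 4 = 0 ∨ m % 4 = 1) :
    2 ^ (m / 3) ≤ skolemCount m := by
  induction m using Nat.strong_induction_on with
  | _ m ih =>
    have hcases : m % 3 = 1 ∨ m % 12 = 5 ∨ m % 12 = 8 ∨ m % 12 = 9 ∨ m % 12 = 0 := by omega
    rcases hcases with h | h | h | h | h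
    · obtain ⟨q, rfl⟩ : ∃ q, m = 3 * q + 1 := ⟨m / 3, by omega⟩
      rw [show (3 * q + 1) / 3 = q by omega]
      have hP : ∃ P, Valid q P := by
        rcases Nat.eq_zero_or_pos q with rfl | hq
        · exact ⟨id, by constructor <;> omega⟩
        · exact exists_valid_of_pos
            (lt_of_lt_of_le (by positivity) (ih q (by omega) hq (by omega)))
      obtain ⟨P, hP⟩ := hP
      exact two_pow_le_of_valid hP
    · rcases Nat.eq_zero_or_pos (m / 12) with h0 | h0
      · obtain rfl : m = 5 := by omega
        exact two_le_skolemCount_five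
      · exact two_pow_le_of_layoutA (i := m / 12) (o := m / 12 - 1) (by omega) (by omega)
    · exact two_pow_le_of_layoutA (i := m / 12) (o := m / 12) (by omega) (by omega)
    · exact two_pow_le_of_layoutB (s := m / 12) (f := 2 * (m / 12) + 1) (by omega) (by omega)
    · exact two_pow_le_of_layoutB (s := m / 12 - 1) (f := 2 * (m / 12 - 1) + 2)
        (by omega) (by omega)
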